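/- For every integer n ≥ 3 with n ≠ 4, the vector 𝔅ₙ|00⟩ = (cos(2π/n), 0, 0, −i·sin(2π/n)) ∈ ℂ⁴ is entangled: there exist no vectors u, v ∈ ℂ² such that (cos(2π/n), 0, 0, −i·sin(2π/n)) = u ⊗ v, i.e. whose components satisfy w_{ij} = uᵢ·vⱼ. Consequently the gate 𝔅ₙ is entangling for n ≠ 2, 4. -/

import Mathlib

open Matrix Complex

/-!
Four amplitudes form a product state exactly when `w₀₀ w₁₁ = w₀₁ w₁₀`, the vanishing of the
determinant of the matrix `(w_{ij})`. For `(cos θ, 0, 0, -i sin θ)` this determinant is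
`-(i/2) sin (2θ)`, and at `θ = 2π/n` it vanishes only if `4/n` is an integer.
-/

/-- A two-qubit product state `u ⊗ v`, with coefficients in any type with a multiplication. The
indices `0, 1, 2, 3` of `w` stand for the basis labels `00, 01, 10, 11`. -/
def IsProductState {R : Type*} [Mul R] (w : Fin 4 → R) : Prop :=
  ∃ u v : Fin 2 → R, w = ![u 0 * v 0, u 0 * v 1, u 1 * v 0, u 1 * v 1]

theorem IsProductState.mul_eq_mul {R : Type*} [CommSemigroup R] {w : Fin 4 → R}
    (hw : IsProductState w) : w 0 * w 3 = w 1 * w 2 := by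
  obtain ⟨u, v, rfl⟩ := hw
  calc u 0 * v 0 * (u 1 * v 1) = u 0 * v 0 * (v 1 * u 1) := by rw [mul_comm (u 1)]
    _ = u 0 * v 1 * (v 0 * u 1) := mul_mul_mul_comm ..
    _ = u 0 * v 1 * (u 1 * v 0) := by rw [mul_comm (v 0)]

theorem isProductState_iff_mul_eq_mul {K : Type*} [Field K] {w : Fin 4 → K} :
    IsProductState w ↔ w 0 * w 3 = w 1 * w 2 := by
  refine ⟨IsProductState.mul_eq_mul, fun hdet ↦ ?_⟩
  by_cases h0 : w 0 = 0
  · have h12 : w 1 = 0 ∨ w 2 = 0 := by simpa [h0] using hdet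
    rcases h12 with h1 | h2
    · exact ⟨![0, 1], ![w 2, w 3], by ext i; fin_cases i <;> simp [h0, h1]⟩
    · exact ⟨![w 1, w 3], ![0, 1], by ext i; fin_cases i <;> simp [h0, h2]⟩
  · have h3 : w 3 = w 2 / w 0 * w 1 := by
      field_simp
      linear_combination hdet
    exact ⟨![1, w 2 / w 0], ![w 0, w 1], by ext i; fin_cases i <;> simp [h0, h3]⟩

theorem sin_mul_pi_div_eq_zero_iff_dvd {m n : ℤ} (hn : n ≠ 0) :
    Real.sin (m * Real.pi / n) = 0 ↔ n ∣ m := by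
  have hn' : (n : ℝ) ≠ 0 := Int.cast_ne_zero.mpr hn
  rw [Real.sin_eq_zero_iff]
  refine exists_congr fun k ↦ ?_
  calc (k : ℝ) * Real.pi = m * Real.pi / n ↔ k * n * Real.pi = m * Real.pi := by
        rw [eq_div_iff hn', mul_right_comm]
    _ ↔ (k * n : ℝ) = m := mul_left_inj' Real.pi_ne_zero
    _ ↔ m = n * k := by rw [mul_comm n, eq_comm]; norm_cast

theorem Bn_ket00_entangled_general (θ : ℝ) :
    ¬ IsProductState ![(Real.cos θ : ℂ), 0, 0, -Complex.I * (Real.sin θ : ℂ)] ↔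
      Real.sin (2 * θ) ≠ 0 := by
  have hdet : (Real.cos θ : ℂ) * (-Complex.I * (Real.sin θ : ℂ)) = 0 * 0 ↔
      Real.sin (2 * θ) = 0 := by
    rw [Real.sin_two_mul]
    simp only [mul_zero, mul_eq_zero, neg_eq_zero, Complex.I_ne_zero, Complex.ofReal_eq_zero,
      OfNat.ofNat_ne_zero, false_or, or_comm]
  exact not_congr (isProductState_iff_mul_eq_mul.trans hdet)

theorem sin_two_mul_two_pi_div_ne_zero {n : ℕ} (hn : 3 ≤ n) (h4 : n ≠ 4) :
    Real.sin (2 * (2 * Real.pi / n)) ≠ 0 := by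
  have hdvd : ¬ (n : ℤ) ∣ 4 := by
    norm_cast
    intro h
    have hle : n ≤ 4 := Nat.le_of_dvd four_pos h
    interval_cases n <;> omega
  have hangle : 2 * (2 * Real.pi / n) = (4 : ℤ) * Real.pi / (n : ℤ) := by
    push_cast
    ring
  rw [hangle]
  exact (sin_mul_pi_div_eq_zero_iff_dvd (by omega)).not.mpr hdvd

/-- For n ≥ 3 with n ≠ 4, the vector 𝔅ₙ|00⟩ = (cos(2π/n), 0, 0, −i sin(2π/n)) is entangled:
it is not a product state u ⊗ v. -/
theorem Bn_ket00_entangled (n : ℕ) (hn : 3 ≤ n) (h4 : n ≠ 4) :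
    ¬ ∃ u v : Fin 2 → ℂ,
      (![(Real.cos (2 * Real.pi / n) : ℂ), 0, 0,
          -Complex.I * (Real.sin (2 * Real.pi / n) : ℂ)] : Fin 4 → ℂ)
        = ![u 0 * v 0, u 0 * v 1, u 1 * v 0, u 1 * v 1] :=
  (Bn_ket00_entangled_general (2 * Real.pi / n)).mpr (sin_two_mul_two_pi_div_ne_zero hn h4)
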